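/- Let β < α < 0 and r > 0, and let D ⊆ {ζ ∈ ℂ : Re ζ < β} be a set having an accumulation point in the open half-plane {Re ζ < β}. Let τ be a Schwartz function on ℝ supported in [0,∞) such that L{τ;·} has an analytic extension F to an open neighborhood of R̄_{α',r'} for some β < α' < α and r' > r, let 0 < h < −α', and set τ_h(x) = e^{-hx}τ(x). Then for every ε > 0 there exist n ∈ ℕ, ζ_1, …, ζ_n ∈ D, and c_1, …, c_n ∈ ℂ such that sup_{x≥0} | τ_h'(x) − Σ_{j=1}^n c_j ζ_j e^{ζ_j x} | + sup_{s∈R̄_{α,r}} | F(s+h) − Σ_{j=1}^n c_j/(s−ζ_j) | < ε, i.e., ‖τ_h − Σ_{j=1}^n c_j e_{ζ_j}‖_{α,r} < ε. -/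

import Mathlib

open Filter Set MeasureTheory

/-- The Laplace transform `L{f;s} = ∫_0^∞ f(x) e^{-sx} dx`. -/
noncomputable def Laplace (f : ℝ → ℂ) (s : ℂ) : ℂ :=
  ∫ x in Set.Ioi (0 : ℝ), f x * Complex.exp (-(s * (x : ℂ)))

/-- The closed rectangle `R̄_{α,r} = {s : α ≤ Re s ≤ 1, |Im s| ≤ r}`. -/
def Rbar (α r : ℝ) : Set ℂ := {s : ℂ | α ≤ s.re ∧ s.re ≤ 1 ∧ |s.im| ≤ r}


lemma exp_bd {s : ℂ} (hs : 0 < s.re) {x : ℝ} (hx : 0 ≤ x) : ‖Complex.exp (-(s * (x : ℂ)))‖ ≤ 1 := by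
  rw [Complex.norm_exp]
  have : (-(s * (x:ℂ))).re = -(s.re * x) := by simp
  rw [this]
  exact Real.exp_le_one_iff.mpr (by nlinarith)

lemma lap_integrable (σ : SchwartzMap ℝ ℂ) (hσ : ∀ x : ℝ, x < 0 → σ x = 0) {s : ℂ} (hs : 0 < s.re) :
    Integrable (fun x : ℝ => σ x * Complex.exp (-(s * (x : ℂ)))) := by
  refine σ.integrable.mono (by
    apply Continuous.aestronglyMeasurable
    have := σ.continuous
    fun_prop) (Eventually.of_forall fun x => ?_)
  rcases lt_or_ge x 0 with hx | hx
  · simp [hσ x hx]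
  · rw [norm_mul]
    exact mul_le_of_le_one_right (norm_nonneg _) (exp_bd hs hx)

lemma lap_eq (σ : SchwartzMap ℝ ℂ) (hσ : ∀ x : ℝ, x < 0 → σ x = 0) (s : ℂ) :
    Laplace σ s = ∫ x : ℝ, σ x * Complex.exp (-(s * (x : ℂ))) := by
  have h0 : σ 0 = 0 := by
    have : IsClosed {x : ℝ | σ x = 0} := isClosed_eq σ.continuous continuous_const
    have h1 : closure (Iio (0:ℝ)) ⊆ {x : ℝ | σ x = 0} :=
      closure_minimal (fun x hx => hσ x hx) this
    rw [closure_Iio] at h1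
    exact h1 (by simp)
  unfold Laplace
  apply setIntegral_eq_integral_of_forall_compl_eq_zero
  intro x hx
  have hx : x ≤ 0 := by simpa using hx
  rcases hx.lt_or_eq with hx | hx
  · simp [hσ x hx]
  · simp [hx, h0]

lemma supp_deriv (σ : SchwartzMap ℝ ℂ) (hσ : ∀ x : ℝ, x < 0 → σ x = 0) :
    ∀ x : ℝ, x < 0 → SchwartzMap.derivCLM ℂ ℂ σ x = 0 := by
  intro x hx
  rw [SchwartzMap.derivCLM_apply]
  have : (σ : ℝ → ℂ) =ᶠ[nhds x] fun _ => 0 := by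
    filter_upwards [Iio_mem_nhds hx] with y hy using hσ y hy
  rw [this.deriv_eq]; simp

lemma lap_deriv (σ : SchwartzMap ℝ ℂ) (hσ : ∀ x : ℝ, x < 0 → σ x = 0) {s : ℂ} (hs : 0 < s.re) :
    Laplace (SchwartzMap.derivCLM ℂ ℂ σ) s = s * Laplace σ s := by
  rw [lap_eq _ (supp_deriv σ hσ), lap_eq _ hσ]
  have hd : ∀ x : ℝ, HasDerivAt (fun x : ℝ => Complex.exp (-(s * (x : ℂ))))
      (-s * Complex.exp (-(s * (x : ℂ)))) x := by
    intro x
    have := ((Complex.ofRealCLM.hasDerivAt (x := x)).const_mul s).neg.cexp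
    simpa [mul_comm] using this
  have hi := lap_integrable σ hσ hs
  have hi' := lap_integrable _ (supp_deriv σ hσ) hs
  have := integral_mul_deriv_eq_deriv_mul_of_integrable (u := σ) (u' := deriv σ)
    (v := fun x : ℝ => Complex.exp (-(s * (x : ℂ))))
    (v' := fun x : ℝ => -s * Complex.exp (-(s * (x : ℂ))))
    (fun x _ => σ.differentiable.differentiableAt.hasDerivAt) (fun x _ => hd x)
    (by refine (hi.const_mul (-s)).congr (Eventually.of_forall fun x => ?_); simp only [Pi.mul_apply]; ring)
    (by refine hi'.congr (Eventually.of_forall fun x => ?_); simp [SchwartzMap.derivCLM_apply])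
    (by refine hi.congr (Eventually.of_forall fun x => ?_); simp)
  simp only [SchwartzMap.derivCLM_apply]
  have h2 : ∫ x : ℝ, σ x * (-s * Complex.exp (-(s * (x : ℂ)))) =
     -s * ∫ x : ℝ, σ x * Complex.exp (-(s * (x : ℂ))) := by
    rw [← integral_const_mul]; congr 1; ext x; ring
  rw [h2] at this
  linear_combination this

lemma lap_bound (k : ℕ) : ∀ (σ : SchwartzMap ℝ ℂ) (_ : ∀ x : ℝ, x < 0 → σ x = 0),
    ∃ C : ℝ, ∀ s : ℂ, 0 < s.re → ‖Laplace σ s‖ * ‖s‖ ^ k ≤ C := by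
  induction k with
  | zero =>
    intro σ hσ
    refine ⟨∫ x, ‖σ x‖, fun s hs => ?_⟩
    rw [lap_eq σ hσ, pow_zero, mul_one]
    refine (norm_integral_le_integral_norm _).trans ?_
    refine integral_mono (lap_integrable σ hσ hs).norm σ.integrable.norm fun x => ?_
    rcases lt_or_ge x 0 with hx | hx
    · simp [hσ x hx]
    · simp only [norm_mul]
      exact mul_le_of_le_one_right (norm_nonneg _) (exp_bd hs hx)
  | succ k ih =>
    intro σ hσ
    obtain ⟨C, hC⟩ := ih _ (supp_deriv σ hσ)
    refine ⟨C, fun s hs => ?_⟩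
    have := hC s hs
    rw [lap_deriv σ hσ hs, norm_mul] at this
    calc _ = ‖s‖ * ‖Laplace σ s‖ * ‖s‖ ^ k := by ring
      _ ≤ C := this

lemma lap_decay (σ : SchwartzMap ℝ ℂ) (hσ : ∀ x : ℝ, x < 0 → σ x = 0) {a : ℝ} (ha : 0 < a) :
    ∃ C : ℝ, ∀ y : ℝ, ‖Laplace σ (a + y * Complex.I)‖ * (1 + |y|) ≤ C * (1 + y ^ 2)⁻¹ := by
  choose C hC using fun k => lap_bound k σ hσ
  refine ⟨C 0 + C 1 + C 2 + C 3, fun y => ?_⟩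
  set s : ℂ := a + y * Complex.I with hs
  have hre : 0 < s.re := by simpa [hs] using ha
  have hy : |y| ≤ ‖s‖ := by simpa [hs] using Complex.abs_im_le_norm s
  have key : ∀ k, ‖Laplace σ s‖ * |y| ^ k ≤ C k := fun k =>
    (mul_le_mul_of_nonneg_left (pow_le_pow_left₀ (abs_nonneg _) hy k) (norm_nonneg _)).trans
      (hC k s hre)
  rw [← div_eq_mul_inv, le_div_iff₀ (by positivity)]
  have h0 := key 0
  have h1 := key 1
  have h2 := key 2
  have h3 := key 3
  rw [← sq_abs y]
  nlinarith

lemma lap_cont (σ : SchwartzMap ℝ ℂ) (hσ : ∀ x : ℝ, x < 0 → σ x = 0) {a : ℝ} (ha : 0 < a) :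
    Continuous fun y : ℝ => Laplace σ (a + y * Complex.I) := by
  simp only [lap_eq σ hσ]
  refine continuous_of_dominated (bound := fun x => ‖σ x‖) (fun y => ?_) (fun y => ?_) σ.integrable.norm ?_
  · exact (lap_integrable σ hσ (by simpa using ha)).aestronglyMeasurable
  · refine Eventually.of_forall fun x => ?_
    rcases lt_or_ge x 0 with hx | hx
    · simp [hσ x hx]
    · rw [norm_mul]
      exact mul_le_of_le_one_right (norm_nonneg _) (exp_bd (by simpa using ha) hx)
  · exact Eventually.of_forall fun x => by fun_prop

lemma lap_line_integrable (σ : SchwartzMap ℝ ℂ) (hσ : ∀ x : ℝ, x < 0 → σ x = 0) {a : ℝ} (ha : 0 < a) :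
    Integrable fun y : ℝ => Laplace σ (a + y * Complex.I) := by
  obtain ⟨C, hC⟩ := lap_decay σ hσ ha
  refine (integrable_inv_one_add_sq.const_mul C).mono' (lap_cont σ hσ ha).aestronglyMeasurable
    (Eventually.of_forall fun y => ?_)
  refine le_trans ?_ (hC y)
  nlinarith [norm_nonneg (Laplace σ (a + y * Complex.I)), abs_nonneg y,
    mul_nonneg (norm_nonneg (Laplace σ (a + y * Complex.I))) (abs_nonneg y)]

open FourierTransform in
lemma lap_inv (σ : SchwartzMap ℝ ℂ) (hσ : ∀ x : ℝ, x < 0 → σ x = 0) {a : ℝ} (ha : 0 < a) (x : ℝ) :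
    ∫ y : ℝ, Laplace σ (a + y * Complex.I) * Complex.exp (y * Complex.I * x) =
      2 * Real.pi * (σ x * Complex.exp (-(a * x))) := by
  set f : ℝ → ℂ := fun x => σ x * Complex.exp (-((a:ℂ) * (x:ℂ))) with hf
  have hfi : Integrable f := lap_integrable σ hσ (by simpa using ha)
  have hfc : Continuous f := by
    have := σ.continuous
    simp only [hf]; fun_prop
  have hF : ∀ w : ℝ, 𝓕 f w = Laplace σ (a + (2 * Real.pi * w : ℝ) * Complex.I) := by
    intro w
    rw [Real.fourier_real_eq_integral_exp_smul, lap_eq σ hσ]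
    congr 1; ext v
    simp only [hf, smul_eq_mul]
    rw [mul_comm, mul_assoc, ← Complex.exp_add]
    congr 2; push_cast; ring
  have hFi : Integrable (𝓕 f) := by
    rw [show 𝓕 f = fun w : ℝ => Laplace σ (a + (2 * Real.pi * w : ℝ) * Complex.I) from funext hF]
    exact (lap_line_integrable σ hσ ha).comp_mul_left' (g := fun y : ℝ => Laplace σ (a + y * Complex.I))
      (by positivity)
  have := hfi.fourierInv_fourier_eq hFi (v := x) hfc.continuousAt
  rw [Real.fourierInv_eq'] at this
  simp only [hF] at this
  have h2 := Measure.integral_comp_mul_left (fun y : ℝ => Laplace σ (a + y * Complex.I) * Complex.exp (y * Complex.I * x)) (2 * Real.pi)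
  have h3 : ∀ w : ℝ, Complex.exp (↑(2 * Real.pi * inner ℝ w x) * Complex.I) •
      Laplace σ (a + (2 * Real.pi * w : ℝ) * Complex.I) =
      Laplace σ (a + (2 * Real.pi * w : ℝ) * Complex.I) * Complex.exp ((2 * Real.pi * w : ℝ) * Complex.I * x) := by
    intro w
    rw [smul_eq_mul, mul_comm]
    congr 2
    simp; ring
  simp only [h3] at this
  rw [this] at h2
  rw [← show f x = σ x * Complex.exp (-((a:ℂ) * (x:ℂ))) from rfl, h2]
  rw [abs_of_pos (by positivity), Complex.real_smul, ← mul_assoc]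
  push_cast
  rw [mul_inv_cancel₀ (by simp [Real.pi_ne_zero]), one_mul]

lemma lap_cauchy (σ : SchwartzMap ℝ ℂ) (hσ : ∀ x : ℝ, x < 0 → σ x = 0) {a : ℝ} (ha : 0 < a)
    {s : ℂ} (hs : a < s.re) :
    ∫ y : ℝ, Laplace σ (a + y * Complex.I) / (s - (a + y * Complex.I)) =
      2 * Real.pi * Laplace σ s := by
  have h1 : 2 * Real.pi * Laplace σ s = ∫ x in Ioi (0:ℝ), ∫ y : ℝ,
      Laplace σ (a + y * Complex.I) * Complex.exp ((-(s - (a + y * Complex.I))) * x) := by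
    unfold Laplace
    rw [← integral_const_mul]
    congr 1; ext x
    have := lap_inv σ hσ ha x
    calc _ = 2 * Real.pi * (σ x * Complex.exp (-(a * x))) * Complex.exp (-((s - a) * x)) := by
            rw [mul_assoc (2 * (Real.pi:ℂ)), mul_assoc (σ x), ← Complex.exp_add]; congr 3; ring_nf
      _ = _ := by
        rw [← this, ← integral_mul_const]
        congr 1; ext y
        rw [mul_assoc, ← Complex.exp_add]
        unfold Laplace
        congr 2; ring
  rw [h1, integral_integral_swap]
  · congr 1; ext y
    rw [integral_const_mul, integral_exp_mul_complex_Ioi (by simpa using hs)]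
    simp only [Complex.ofReal_zero, mul_zero, Complex.exp_zero]
    rw [div_eq_mul_inv, neg_div_neg_eq, one_div]
  · have hi : Integrable (fun x : ℝ => Complex.exp (-(s - a) * x)) (volume.restrict (Ioi 0)) :=
      integrableOn_exp_mul_complex_Ioi (by simpa using hs) 0
    have h2 := hi.mul_prod (lap_line_integrable σ hσ ha)
    refine h2.mono ?_ (Eventually.of_forall fun p => ?_)
    · apply Continuous.aestronglyMeasurable
      have := (lap_cont σ hσ ha).comp (continuous_snd (X := ℝ) (Y := ℝ))
      refine Continuous.mul this ?_
      fun_prop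
    · simp only [Function.uncurry]
      rw [norm_mul, norm_mul, mul_comm]
      gcongr
      rw [Complex.norm_exp, Complex.norm_exp]
      simp

lemma taylor_bd {f : ℂ → ℂ} {z₀ : ℂ} {ρ C : ℝ} (hρ : 0 < ρ)
    (hf : DifferentiableOn ℂ f (Metric.ball z₀ ρ)) (hC : ∀ z ∈ Metric.ball z₀ ρ, ‖f z‖ ≤ C) :
    ‖deriv f z₀‖ ≤ C / (ρ / 4) ∧ ∀ z ∈ Metric.ball z₀ (ρ / 4),
      ‖f z - f z₀ - (z - z₀) * deriv f z₀‖ ≤ (C / (ρ / 4) / (ρ / 4)) * ‖z - z₀‖ ^ 2 := by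
  have hop := Metric.isOpen_ball (x := z₀) (ε := ρ)
  have h1 : ∀ z ∈ Metric.ball z₀ (ρ * 3 / 4), ‖deriv f z‖ ≤ C / (ρ / 4) := by
    intro z hz
    have hsub : Metric.closedBall z (ρ / 4) ⊆ Metric.ball z₀ ρ := by
      intro w hw
      rw [Metric.mem_ball] at *; rw [Metric.mem_closedBall] at hw
      linarith [dist_triangle w z z₀]
    refine Complex.norm_deriv_le_of_forall_mem_sphere_norm_le (by positivity) ?_ ?_
    · exact (hf.mono hsub).diffContOnCl_ball subset_rfl
    · intro w hw
      exact hC w (hsub (Metric.sphere_subset_closedBall hw))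
  have hd : DifferentiableOn ℂ (deriv f) (Metric.ball z₀ ρ) := hf.deriv hop
  have h2 : ∀ z ∈ Metric.ball z₀ (ρ / 4), ‖deriv (deriv f) z‖ ≤ C / (ρ / 4) / (ρ / 4) := by
    intro z hz
    have hsub : Metric.closedBall z (ρ / 4) ⊆ Metric.ball z₀ (ρ * 3 / 4) := by
      intro w hw
      rw [Metric.mem_ball] at *; rw [Metric.mem_closedBall] at hw
      linarith [dist_triangle w z z₀]
    refine Complex.norm_deriv_le_of_forall_mem_sphere_norm_le (by positivity) ?_ ?_
    · exact ((hd.mono (Metric.ball_subset_ball (by linarith))).mono hsub).diffContOnCl_ball subset_rfl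
    · intro w hw
      exact h1 w (hsub (Metric.sphere_subset_closedBall hw))
  refine ⟨h1 z₀ (Metric.mem_ball_self (by positivity)), fun z hz => ?_⟩
  have hat : ∀ w ∈ Metric.ball z₀ (ρ / 4), DifferentiableAt ℂ f w ∧ DifferentiableAt ℂ (deriv f) w := by
    intro w hw
    have : w ∈ Metric.ball z₀ ρ := Metric.ball_subset_ball (by linarith) hw
    exact ⟨hf.differentiableAt (hop.mem_nhds this), hd.differentiableAt (hop.mem_nhds this)⟩
  have hz0 : z₀ ∈ Metric.ball z₀ (ρ / 4) := Metric.mem_ball_self (by positivity)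
  have h3 : ∀ w ∈ Metric.ball z₀ (ρ / 4), ‖deriv f w - deriv f z₀‖ ≤ (C / (ρ / 4) / (ρ / 4)) * ‖w - z₀‖ :=
    fun w hw => (convex_ball z₀ (ρ / 4)).norm_image_sub_le_of_norm_deriv_le
      (fun x hx => (hat x hx).2) h2 hz0 hw
  have hK : 0 ≤ C / (ρ / 4) / (ρ / 4) := (norm_nonneg _).trans (h2 z₀ hz0)
  have hsub : Metric.closedBall z₀ ‖z - z₀‖ ⊆ Metric.ball z₀ (ρ / 4) := by
    intro w hw
    rw [Metric.mem_ball, dist_eq_norm] at *; rw [Metric.mem_closedBall, dist_eq_norm] at hw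
    linarith
  have h4 := (convex_closedBall z₀ ‖z - z₀‖).norm_image_sub_le_of_norm_hasDerivWithin_le
    (f := fun w => f w - w * deriv f z₀) (f' := fun w => deriv f w - deriv f z₀)
    (C := (C / (ρ / 4) / (ρ / 4)) * ‖z - z₀‖) (x := z₀) (y := z)
    (fun w hw => by
      have := ((hat w (hsub hw)).1.hasDerivAt.sub ((hasDerivAt_id w).mul_const (deriv f z₀)))
      have h5 := this.hasDerivWithinAt (s := Metric.closedBall z₀ ‖z - z₀‖)
      rw [one_mul] at h5
      exact h5)
    (fun w hw => (h3 w (hsub hw)).trans (by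
      rw [Metric.mem_closedBall, dist_eq_norm] at hw
      gcongr))
    (by simp) (by simp [dist_eq_norm])
  calc _ = ‖(f z - z * deriv f z₀) - (f z₀ - z₀ * deriv f z₀)‖ := by congr 1; ring
    _ ≤ _ := h4
    _ = _ := by ring

open BoundedContinuousFunction in
lemma bcf_diff {X : Type} [TopologicalSpace X] [DiscreteTopology X] [Nonempty X] {Ω : Set ℂ} (g : ℂ → X → ℂ)
    (hg : ∀ p, DifferentiableOn ℂ (fun ζ => g ζ p) Ω)
    (hb : ∀ z ∈ Ω, ∃ ρ > 0, ∃ C, Metric.ball z ρ ⊆ Ω ∧ ∀ ζ ∈ Metric.ball z ρ, ∀ p, ‖g ζ p‖ ≤ C) :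
    ∃ G : ℂ → X →ᵇ ℂ, DifferentiableOn ℂ G Ω ∧ ∀ ζ ∈ Ω, ∀ p, G ζ p = g ζ p := by
  classical
  let G : ℂ → X →ᵇ ℂ := fun ζ => if hc : ∃ C, ∀ p, ‖g ζ p‖ ≤ C then
    ofNormedAddCommGroupDiscrete (g ζ) hc.choose hc.choose_spec else 0
  have hG : ∀ ζ ∈ Ω, ∀ p, G ζ p = g ζ p := by
    intro ζ hζ p
    obtain ⟨ρ, hρ, C, -, hC⟩ := hb ζ hζ
    have hc : ∃ C, ∀ p, ‖g ζ p‖ ≤ C := ⟨C, hC ζ (Metric.mem_ball_self hρ)⟩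
    simp only [G, dif_pos hc]
    rfl
  refine ⟨G, fun z hz => ?_, hG⟩
  obtain ⟨ρ, hρ, C, hsub, hC⟩ := hb z hz
  have ht := fun p => taylor_bd hρ ((hg p).mono hsub) (fun w hw => hC w hw p)
  let G' : X →ᵇ ℂ := ofNormedAddCommGroupDiscrete (fun p => deriv (fun ζ => g ζ p) z) _ (fun p => (ht p).1)
  have : HasDerivAt G G' z := by
    rw [hasDerivAt_iff_isLittleO]
    refine Asymptotics.IsBigO.trans_isLittleO (g := fun w => ‖w - z‖ ^ 2) ?_ ?_
    · refine Asymptotics.IsBigO.of_bound (C / (ρ / 4) / (ρ / 4)) ?_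
      filter_upwards [Metric.ball_mem_nhds z (show 0 < ρ / 4 by positivity)] with w hw
      have hw' : w ∈ Metric.ball z ρ := Metric.ball_subset_ball (by linarith) hw
      rw [norm_pow, norm_norm]
      refine (norm_le_of_nonempty).2 fun p => ?_
      have := (ht p).2 w hw
      simpa [hG w (hsub hw') p, hG z hz p, G'] using this
    · exact Asymptotics.isLittleO_pow_sub_sub z (by norm_num)
  exact this.differentiableAt.differentiableWithinAt

/-- The contour: the vertical line `Re = b` with a rectangular detour to `Re = c` for `|Im| ≤ R`. -/
def Gam (b c R : ℝ) : Set ℂ := {ζ | (ζ.re = b ∧ R ≤ |ζ.im|) ∨ (c ≤ ζ.re ∧ ζ.re ≤ b ∧ |ζ.im| = R) ∨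
  (ζ.re = c ∧ |ζ.im| ≤ R)}

/-- Integral along the contour. -/
noncomputable def Cint {E : Type*} [NormedAddCommGroup E] [NormedSpace ℂ E] (b c R : ℝ) (f : ℂ → E) : E :=
  Complex.I • (∫ t : ℝ in {t : ℝ | R < |t|}, f (b + t * Complex.I)) +
  Complex.I • (∫ t : ℝ in Ioc (-R) R, f (c + t * Complex.I)) -
  (∫ t : ℝ in Ioc c b, f (t + (-R : ℝ) * Complex.I)) +
  (∫ t : ℝ in Ioc c b, f (t + R * Complex.I))

lemma meas_tail (R : ℝ) : MeasurableSet {t : ℝ | R < |t|} :=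
  measurableSet_lt measurable_const (by fun_prop)

lemma gam1 {b c R : ℝ} {t : ℝ} (ht : t ∈ {t : ℝ | R < |t|}) :
    (b + t * Complex.I : ℂ) ∈ Gam b c R := by
  left; simpa using le_of_lt ht

lemma gam2 {b c R : ℝ} {t : ℝ} (ht : t ∈ Icc (-R) R) : (c + t * Complex.I : ℂ) ∈ Gam b c R := by
  right; right; simpa [abs_le] using ht

lemma gam3 {b c R : ℝ} (hR : 0 < R) {t : ℝ} (ht : t ∈ Icc c b) :
    (t + (-R : ℝ) * Complex.I : ℂ) ∈ Gam b c R := by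
  right; left; simpa [abs_of_pos hR] using ht

lemma gam4 {b c R : ℝ} (hR : 0 < R) {t : ℝ} (ht : t ∈ Icc c b) :
    (t + R * Complex.I : ℂ) ∈ Gam b c R := by
  right; left; simpa [abs_of_pos hR] using ht

section
set_option linter.unusedSectionVars false
variable {E : Type*} [NormedAddCommGroup E] [NormedSpace ℂ E]

lemma seg_int {b c R : ℝ} (hR : 0 < R) {f : ℂ → E} (hf : ContinuousOn f (Gam b c R)) :
    IntegrableOn (fun t : ℝ => f (c + t * Complex.I)) (Ioc (-R) R) ∧
    IntegrableOn (fun t : ℝ => f (t + (-R : ℝ) * Complex.I)) (Ioc c b) ∧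
    IntegrableOn (fun t : ℝ => f (t + R * Complex.I)) (Ioc c b) := by
  refine ⟨?_, ?_, ?_⟩
  · exact ((hf.comp (by fun_prop) (fun t ht => gam2 ht)).integrableOn_compact isCompact_Icc).mono_set Ioc_subset_Icc_self
  · exact ((hf.comp (by fun_prop) (fun t ht => gam3 hR ht)).integrableOn_compact isCompact_Icc).mono_set Ioc_subset_Icc_self
  · exact ((hf.comp (by fun_prop) (fun t ht => gam4 hR ht)).integrableOn_compact isCompact_Icc).mono_set Ioc_subset_Icc_self

lemma Cint_map {F : Type*} [NormedAddCommGroup F] [NormedSpace ℂ F] [CompleteSpace E] [CompleteSpace F]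
    {b c R : ℝ} (hR : 0 < R) {f : ℂ → E} (hf : ContinuousOn f (Gam b c R))
    (ht : IntegrableOn (fun t : ℝ => f (b + t * Complex.I)) {t : ℝ | R < |t|}) (L : E →L[ℂ] F) :
    L (Cint b c R f) = Cint b c R (fun z => L (f z)) := by
  obtain ⟨h2, h3, h4⟩ := seg_int hR hf
  unfold Cint
  rw [map_add, map_sub, map_add, map_smul, map_smul, ← L.integral_comp_comm ht, ← L.integral_comp_comm h2,
    ← L.integral_comp_comm h3, ← L.integral_comp_comm h4]

lemma Cint_congr {b c R : ℝ} (hR : 0 < R) {f g : ℂ → E} (hfg : EqOn f g (Gam b c R)) :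
    Cint b c R f = Cint b c R g := by
  unfold Cint
  rw [setIntegral_congr_fun (meas_tail R) (fun t ht => hfg (gam1 ht)),
    setIntegral_congr_fun measurableSet_Ioc (fun t ht => hfg (gam2 (Ioc_subset_Icc_self ht))),
    setIntegral_congr_fun measurableSet_Ioc (fun t ht => hfg (gam3 hR (Ioc_subset_Icc_self ht))),
    setIntegral_congr_fun measurableSet_Ioc (fun t ht => hfg (gam4 hR (Ioc_subset_Icc_self ht)))]

lemma Cint_line [CompleteSpace E] {b c R : ℝ} (hR : 0 < R) (hcb : c ≤ b) {f : ℂ → E}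
    (hf : DifferentiableOn ℂ f (Icc c b ×ℂ Icc (-R) R))
    (ht : Integrable (fun t : ℝ => f (b + t * Complex.I))) :
    Cint b c R f = Complex.I • ∫ t : ℝ, f (b + t * Complex.I) := by
  have h := Complex.integral_boundary_rect_eq_zero_of_differentiableOn f (c + (-R:ℝ) * Complex.I)
    (b + R * Complex.I) (by simpa [uIcc_of_le hcb, uIcc_of_le (show -R ≤ R by linarith)] using hf)
  have e1 : ((c:ℂ) + (-R:ℝ) * Complex.I).re = c := by simp
  have e2 : ((c:ℂ) + (-R:ℝ) * Complex.I).im = -R := by simp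
  have e3 : ((b:ℂ) + R * Complex.I).re = b := by simp
  have e4 : ((b:ℂ) + R * Complex.I).im = R := by simp
  rw [e1, e2, e3, e4, intervalIntegral.integral_of_le hcb, intervalIntegral.integral_of_le hcb,
    intervalIntegral.integral_of_le (by linarith), intervalIntegral.integral_of_le (by linarith)] at h
  have hs : ∫ t : ℝ, f (b + t * Complex.I) = (∫ t : ℝ in {t : ℝ | R < |t|}, f (b + t * Complex.I)) +
      ∫ t : ℝ in Ioc (-R) R, f (b + t * Complex.I) := by
    rw [← integral_add_compl (meas_tail R) ht]
    congr 1
    have : {t : ℝ | R < |t|}ᶜ = Icc (-R) R := by ext t; simp [abs_le]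
    rw [this, integral_Icc_eq_integral_Ioc]
  rw [hs, smul_add]
  unfold Cint
  rw [← sub_eq_zero] at h ⊢
  rw [← neg_eq_zero, ← h]
  abel
end

lemma diff_piece {μ : Measure ℝ} {φ : ℝ → ℂ} (hφ : Integrable φ μ) {γ : ℝ → ℂ} (hγ : Measurable γ)
    {W : Set ℂ} (hW : IsOpen W) (hγW : ∀ᵐ t ∂μ, γ t ∉ W) :
    DifferentiableOn ℂ (fun s => ∫ t, φ t / (s - γ t) ∂μ) W := by
  intro s hs
  obtain ⟨d, hd, hsub⟩ := Metric.isOpen_iff.1 hW s hs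
  have hlow : ∀ᵐ t ∂μ, ∀ w ∈ Metric.ball s (d / 2), d / 2 ≤ ‖w - γ t‖ := by
    filter_upwards [hγW] with t ht w hw
    by_contra hlt
    push Not at hlt
    apply ht
    apply hsub
    rw [Metric.mem_ball] at *
    have := dist_triangle (γ t) w s
    rw [dist_comm (γ t) w, dist_eq_norm w (γ t)] at this
    linarith
  have hm : ∀ w : ℂ, AEStronglyMeasurable (fun t => φ t / (w - γ t)) μ := fun w =>
    (hφ.aestronglyMeasurable.aemeasurable.div (by fun_prop)).aestronglyMeasurable
  have := hasDerivAt_integral_of_dominated_loc_of_deriv_le (μ := μ) (𝕜 := ℂ)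
    (F := fun s t => φ t / (s - γ t)) (x₀ := s) (F' := fun s t => -φ t / (s - γ t) ^ 2)
    (s := Metric.ball s (d / 2)) (bound := fun t => ‖φ t‖ * (1 / (d / 2) ^ 2))
    (Metric.ball_mem_nhds s (by positivity)) (Eventually.of_forall hm) ?_ ?_ ?_ (hφ.norm.mul_const _) ?_
  · exact this.2.differentiableAt.differentiableWithinAt
  · refine (hφ.norm.mul_const (1 / (d / 2))).mono' (hm s) ?_
    filter_upwards [hlow] with t ht
    rw [norm_div, div_eq_mul_one_div]
    gcongr
    exact ht s (Metric.mem_ball_self (by positivity))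
  · exact (hφ.aestronglyMeasurable.aemeasurable.neg.div (by fun_prop)).aestronglyMeasurable
  · filter_upwards [hlow] with t ht w hw
    rw [norm_div, norm_neg, norm_pow, div_eq_mul_one_div]
    gcongr
    exact ht w hw
  · filter_upwards [hlow] with t ht w hw
    have hne : w - γ t ≠ 0 := by
      have := ht w hw
      rw [← norm_pos_iff]; linarith
    have := (hasDerivAt_const w (φ t)).div ((hasDerivAt_id w).sub_const (γ t)) hne
    simp only [zero_mul, mul_one, zero_sub] at this
    exact this

lemma Cint_diff {b c R : ℝ} (hR : 0 < R) (hcb : c ≤ b) {φ : ℂ → ℂ} (hφ : ContinuousOn φ (Gam b c R))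
    (ht : IntegrableOn (fun t : ℝ => φ (b + t * Complex.I)) {t : ℝ | R < |t|}) :
    DifferentiableOn ℂ (fun s => Cint b c R (fun z => φ z / (s - z))) {s : ℂ | c < s.re ∧ |s.im| < R} := by
  obtain ⟨h2, h3, h4⟩ := seg_int hR hφ
  have hW : IsOpen {s : ℂ | c < s.re ∧ |s.im| < R} :=
    (isOpen_lt continuous_const Complex.continuous_re).inter
      (isOpen_lt (Complex.continuous_im.abs) continuous_const)
  have hd : ∀ z ∈ Gam b c R, z ∉ {s : ℂ | c < s.re ∧ |s.im| < R} := by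
    rintro z (h | h | h) ⟨h5, h6⟩ <;> linarith [h.1, h.2]
  unfold Cint
  refine (((diff_piece ht (γ := fun t : ℝ => b + t * Complex.I) (by fun_prop) hW ?_).const_smul Complex.I).add
    ((diff_piece h2 (γ := fun t : ℝ => c + t * Complex.I) (by fun_prop) hW ?_).const_smul Complex.I)
    |>.sub (diff_piece h3 (γ := fun t : ℝ => t + (-R : ℝ) * Complex.I) (by fun_prop) hW ?_)).add
    (diff_piece h4 (γ := fun t : ℝ => t + R * Complex.I) (by fun_prop) hW ?_)
  · exact (ae_restrict_mem (meas_tail R)).mono fun t ht => hd _ (gam1 ht)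
  · exact (ae_restrict_mem measurableSet_Ioc).mono fun t ht => hd _ (gam2 (Ioc_subset_Icc_self ht))
  · exact (ae_restrict_mem measurableSet_Ioc).mono fun t ht => hd _ (gam3 hR (Ioc_subset_Icc_self ht))
  · exact (ae_restrict_mem measurableSet_Ioc).mono fun t ht => hd _ (gam4 hR (Ioc_subset_Icc_self ht))

/-- Index set of the two suprema. -/
inductive Idx (α r : ℝ) : Type
  | t (x : ℝ) (hx : 0 ≤ x) : Idx α r
  | s (s : ℂ) (hs : s ∈ Rbar α r) : Idx α r

instance (α r : ℝ) : TopologicalSpace (Idx α r) := ⊥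
instance (α r : ℝ) : DiscreteTopology (Idx α r) := ⟨rfl⟩
instance (α r : ℝ) : Nonempty (Idx α r) := ⟨Idx.t 0 le_rfl⟩

/-- The exponentials and their Laplace transforms. -/
noncomputable def gfun (α r : ℝ) (ζ : ℂ) : Idx α r → ℂ
  | Idx.t x _ => ζ * Complex.exp (ζ * x)
  | Idx.s s _ => 1 / (s - ζ)

/-- The region on which the family is holomorphic. -/
def Om (α r : ℝ) : Set ℂ := {ζ | ζ.re < α} ∪ {ζ | ζ.re < 0 ∧ r < ζ.im} ∪ {ζ | ζ.re < 0 ∧ ζ.im < -r}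

lemma Om_open (α r : ℝ) : IsOpen (Om α r) := by
  have hr := Complex.continuous_re
  have hi := Complex.continuous_im
  exact ((isOpen_lt hr continuous_const).union ((isOpen_lt hr continuous_const).inter
    (isOpen_lt continuous_const hi))).union ((isOpen_lt hr continuous_const).inter
    (isOpen_lt hi continuous_const))

lemma Om_preconn {α r : ℝ} (hα : α < 0) : IsPreconnected (Om α r) := by
  have c1 : Convex ℝ {ζ : ℂ | ζ.re < α} := convex_halfSpace_re_lt α
  have c2 : Convex ℝ {ζ : ℂ | ζ.re < 0 ∧ r < ζ.im} :=
    (convex_halfSpace_re_lt 0).inter (convex_halfSpace_im_gt r)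
  have c3 : Convex ℝ {ζ : ℂ | ζ.re < 0 ∧ ζ.im < -r} :=
    (convex_halfSpace_re_lt 0).inter (convex_halfSpace_im_lt (-r))
  refine IsPreconnected.union (⟨α - 1, -r - 1⟩ : ℂ) ?_ ?_ (IsPreconnected.union (⟨α - 1, r + 1⟩ : ℂ) ?_ ?_
    c1.isPreconnected c2.isPreconnected) c3.isPreconnected
  · left; simp
  · constructor <;> simp <;> linarith
  · simp
  · constructor <;> simp <;> linarith

lemma Om_neg {α r : ℝ} (hα : α < 0) {ζ : ℂ} (h : ζ ∈ Om α r) : ζ.re < 0 := by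
  rcases h with (h | h) | h
  · exact lt_trans h hα
  · exact h.1
  · exact h.1

lemma Om_not {α r : ℝ} {s : ℂ} (hs : s ∈ Rbar α r) : s ∉ Om α r := by
  obtain ⟨h1, h2, h3⟩ := hs
  rw [abs_le] at h3
  rintro ((h | h) | h)
  · exact absurd h (not_lt.2 h1)
  · linarith [h.2]
  · linarith [h.2]

lemma gfun_exp_bd {ζ : ℂ} (h : ζ.re < 0) {x : ℝ} (hx : 0 ≤ x) : ‖ζ * Complex.exp (ζ * x)‖ ≤ ‖ζ‖ := by
  rw [norm_mul]
  refine mul_le_of_le_one_right (norm_nonneg _) ?_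
  rw [Complex.norm_exp, Real.exp_le_one_iff]
  simp; nlinarith

open BoundedContinuousFunction in
lemma exists_G {α r : ℝ} (hα : α < 0) : ∃ G : ℂ → Idx α r →ᵇ ℂ, DifferentiableOn ℂ G (Om α r) ∧
    ∀ ζ ∈ Om α r, ∀ p, G ζ p = gfun α r ζ p := by
  apply bcf_diff
  · rintro (⟨x, hx⟩ | ⟨s, hs⟩)
    · simp only [gfun]; fun_prop
    · simp only [gfun]
      refine DifferentiableOn.div (by fun_prop) (by fun_prop) fun ζ hζ h0 => ?_
      rw [sub_eq_zero] at h0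
      exact Om_not hs (h0 ▸ hζ)
  · intro z hz
    obtain ⟨ρ, hρ, hsub⟩ := Metric.isOpen_iff.1 (Om_open α r) z hz
    refine ⟨ρ / 2, by positivity, ‖z‖ + ρ / 2 + 1 / (ρ / 2),
      (Metric.ball_subset_ball (by linarith)).trans hsub, ?_⟩
    have hp : 0 < 1 / (ρ / 2) := by positivity
    rintro ζ hζ (⟨x, hx⟩ | ⟨s, hs⟩)
    · refine (gfun_exp_bd (Om_neg hα (hsub (Metric.ball_subset_ball (by linarith) hζ))) hx).trans ?_
      rw [Metric.mem_ball, dist_eq_norm] at hζ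
      have := norm_le_norm_add_norm_sub' ζ z
      linarith
    · have h1 : ρ / 2 ≤ ‖s - ζ‖ := by
        by_contra hlt
        push Not at hlt
        refine Om_not hs (hsub ?_)
        rw [Metric.mem_ball] at *
        have := dist_triangle s ζ z
        rw [dist_eq_norm s ζ] at this
        linarith
      have h2 : ‖1 / (s - ζ)‖ ≤ 1 / (ρ / 2) := by
        rw [norm_div, norm_one]; gcongr
      refine h2.trans ?_
      have := norm_nonneg z
      linarith

lemma lap_sub (τ : SchwartzMap ℝ ℂ) (hτ : ∀ x : ℝ, x < 0 → τ x = 0) (h : ℂ) {s : ℂ} (hs : 0 < s.re) :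
    Laplace (SchwartzMap.derivCLM ℂ ℂ τ - h • τ) s = (s - h) * Laplace τ s := by
  have h1 := lap_deriv τ hτ hs
  have i1 := (lap_integrable _ (supp_deriv τ hτ) hs).integrableOn (s := Ioi 0)
  have i2 := (lap_integrable _ hτ hs).integrableOn (s := Ioi 0)
  have : Laplace (SchwartzMap.derivCLM ℂ ℂ τ - h • τ) s =
      Laplace (SchwartzMap.derivCLM ℂ ℂ τ) s - h * Laplace τ s := by
    unfold Laplace
    rw [← integral_const_mul, ← integral_sub i1 (i2.const_mul h)]
    congr 1; ext x
    simp only [Pi.sub_apply, Pi.smul_apply, smul_eq_mul]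
    ring
  rw [this, h1]; ring

/-- Approximation of `τ_h` by finite linear combinations of exponentials
`e_ζ` with `ζ ∈ D`, where `D` is any subset of `{Re ζ < β}` having an
accumulation point in that half-plane: for every `ε > 0` there are
`ζ_1, …, ζ_n ∈ D` and `c_1, …, c_n ∈ ℂ` with
`‖τ_h − Σ c_j e_{ζ_j}‖_{α,r} < ε`. -/
theorem approximation_by_exponentials
    (β α' α r r' : ℝ) (hβ : β < α') (hα' : α' < α) (hα : α < 0)
    (hr : 0 < r) (hr' : r < r')
    (D : Set ℂ) (hD : D ⊆ {ζ : ℂ | ζ.re < β})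
    (hacc : ∃ z : ℂ, z.re < β ∧ AccPt z (Filter.principal D))
    (τ : SchwartzMap ℝ ℂ) (hsupp : ∀ x : ℝ, x < 0 → τ x = 0)
    (U : Set ℂ) (hU : IsOpen U) (hUR : Rbar α' r' ⊆ U)
    (F : ℂ → ℂ)
    (hFan : DifferentiableOn ℂ F (U ∪ {s : ℂ | 0 < s.re}))
    (hFeq : ∀ s : ℂ, 0 < s.re → F s = Laplace (⇑τ) s)
    (h : ℝ) (hh0 : 0 < h) (hhα' : h < -α')
    (ε : ℝ) (hε : 0 < ε) :
    ∃ (n : ℕ) (ζs : Fin n → ℂ) (c : Fin n → ℂ),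
      (∀ j : Fin n, ζs j ∈ D) ∧
      ∃ ε₁ ε₂ : ℝ, 0 ≤ ε₁ ∧ 0 ≤ ε₂ ∧ ε₁ + ε₂ < ε ∧
        (∀ x : ℝ, 0 ≤ x →
          ‖deriv (fun y : ℝ => Complex.exp (-((h : ℂ) * (y : ℂ))) * τ y) x
            - ∑ j : Fin n, c j * ζs j * Complex.exp (ζs j * (x : ℂ))‖ ≤ ε₁) ∧
        (∀ s ∈ Rbar α r,
          ‖F (s + (h : ℂ)) - ∑ j : Fin n, c j / (s - ζs j)‖ ≤ ε₂) := by
  classical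
  set δ : ℝ := min h (-α) / 2 with hδ
  have hδ0 : 0 < δ := by rw [hδ]; have : 0 < min h (-α) := lt_min hh0 (by linarith); linarith
  have hδh : δ < h := by have := min_le_left h (-α); linarith
  have hδα : δ < -α := by have := min_le_right h (-α); linarith
  set b : ℝ := -δ with hb
  set c : ℝ := (α' + α) / 2 with hc
  set R : ℝ := (r + r') / 2 with hRdef
  have hR : 0 < R := by rw [hRdef]; linarith
  have hrR : r < R := by rw [hRdef]; linarith
  have hRr' : R < r' := by rw [hRdef]; linarith
  have hcb : c ≤ b := by rw [hc, hb]; linarith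
  have hcα : c < α := by rw [hc]; linarith
  have hcα' : α' < c := by rw [hc]; linarith
  set a : ℝ := h - δ with ha'
  have ha : 0 < a := by rw [ha']; linarith
  clear_value c R
  have hab : ∀ t : ℝ, (b + t * Complex.I + h : ℂ) = a + t * Complex.I := by
    intro t; rw [ha', hb]; push_cast; ring
  have hFline : ∀ t : ℝ, F (b + t * Complex.I + h) = Laplace τ (a + t * Complex.I) := by
    intro t; rw [hab, hFeq _ (by simpa using ha)]
  -- the region of analyticity
  set N : Set ℂ := {ζ | ζ + (h:ℂ) ∈ U ∪ {s : ℂ | 0 < s.re}} with hN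
  have hN1 : ∀ ζ : ℂ, c ≤ ζ.re → |ζ.im| ≤ R → ζ ∈ N := by
    intro ζ h1 h2
    rcases le_or_gt (ζ.re + h) 0 with h3 | h3
    · left
      refine hUR ⟨?_, ?_, ?_⟩
      · simp; linarith
      · simp; linarith
      · simp; linarith
    · right
      simpa using h3
  have hN2 : ∀ ζ : ℂ, ζ.re = b → ζ ∈ N := by
    intro ζ h1
    right
    simp [h1, hb]; linarith
  have hFh : DifferentiableOn ℂ (fun ζ => F (ζ + h)) N :=
    hFan.comp (by fun_prop) (fun ζ hζ => hζ)
  have hGN : Gam b c R ⊆ N := by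
    rintro ζ (h1 | h1 | h1)
    · exact hN2 ζ h1.1
    · exact hN1 ζ h1.1 h1.2.2.le
    · exact hN1 ζ h1.1.ge h1.2
  have hrectN : Icc c b ×ℂ Icc (-R) R ⊆ N := by
    rintro ζ ⟨h1, h2⟩
    exact hN1 ζ h1.1 (abs_le.2 h2)
  have hGO : Gam b c R ⊆ Om α r := by
    have key : ∀ ζ : ℂ, ζ.re < 0 → R ≤ |ζ.im| → ζ ∈ Om α r := by
      intro ζ h1 h2
      rcases le_abs'.1 h2 with h3 | h3
      · right; exact ⟨h1, by linarith⟩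
      · left; right; exact ⟨h1, by linarith⟩
    rintro ζ (h1 | h1 | h1)
    · exact key ζ (by rw [h1.1]; linarith) h1.2
    · exact key ζ (by linarith [h1.2.1]) h1.2.2.ge
    · left; left; change ζ.re < α; rw [h1.1]; exact hcα
  obtain ⟨G, hGd, hG⟩ := exists_G (r := r) hα
  have hfc : ContinuousOn (fun ζ => F (ζ + h) • G ζ) (Gam b c R) :=
    (hFh.continuousOn.mono hGN).smul (hGd.continuousOn.mono hGO)
  obtain ⟨C, hC⟩ := lap_decay τ hsupp ha
  have hcurve : ContinuousOn (fun t : ℝ => (b + t * Complex.I : ℂ)) {t : ℝ | R < |t|} := by fun_prop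
  have hft : IntegrableOn (fun t : ℝ => F (b + t * Complex.I + h) • G (b + t * Complex.I)) {t : ℝ | R < |t|} := by
    set K : ℝ := |b| + 1 + 1 / (R - r) with hK
    have hq : 0 < 1 / (R - r) := by have : 0 < R - r := by linarith
                                    positivity
    have hK0 : 0 < K := by positivity
    refine Integrable.mono' ((integrable_inv_one_add_sq.const_mul (C * K)).integrableOn) ?_ ?_
    · exact (hfc.comp hcurve (fun t ht => gam1 ht)).aestronglyMeasurable (meas_tail R)
    · refine (ae_restrict_mem (meas_tail R)).mono fun t ht => ?_
      have hz : (b + t * Complex.I : ℂ) ∈ Om α r := hGO (gam1 ht)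
      have hGb : ‖G (b + t * Complex.I)‖ ≤ K * (1 + |t|) := by
        refine (BoundedContinuousFunction.norm_le_of_nonempty).2 ?_
        rintro (⟨x, hx⟩ | ⟨s, hs⟩)
        · rw [hG _ hz]
          refine (gfun_exp_bd (Om_neg hα hz) hx).trans ?_
          refine (norm_add_le _ _).trans ?_
          simp only [Complex.norm_real, norm_mul, Complex.norm_I, mul_one, Real.norm_eq_abs]
          rw [hK]
          nlinarith [abs_nonneg b, abs_nonneg t, mul_nonneg (abs_nonneg b) (abs_nonneg t),
            mul_nonneg hq.le (abs_nonneg t)]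
        · rw [hG _ hz]
          simp only [gfun]
          have h1 : R - r ≤ ‖s - (b + t * Complex.I)‖ := by
            have h2 := Complex.abs_im_le_norm (s - (b + t * Complex.I))
            have h3 : (s - (b + t * Complex.I)).im = s.im - t := by simp
            rw [h3] at h2
            have h4 := abs_sub_abs_le_abs_sub t s.im
            rw [abs_sub_comm] at h4
            have h5 := hs.2.2
            have h6 : R < |t| := ht
            linarith
          have h2 : ‖1 / (s - (b + t * Complex.I))‖ ≤ 1 / (R - r) := by
            rw [norm_div, norm_one]
            exact one_div_le_one_div_of_le (by linarith) h1
          refine h2.trans ?_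
          rw [hK]
          nlinarith [abs_nonneg b, abs_nonneg t, mul_nonneg (abs_nonneg b) (abs_nonneg t),
            mul_nonneg hq.le (abs_nonneg t)]
      rw [norm_smul, hFline]
      calc _ ≤ ‖Laplace τ (a + t * Complex.I)‖ * (K * (1 + |t|)) := by gcongr
        _ = K * (‖Laplace τ (a + t * Complex.I)‖ * (1 + |t|)) := by ring
        _ ≤ K * (C * (1 + t ^ 2)⁻¹) := mul_le_mul_of_nonneg_left (hC t) hK0.le
        _ = _ := by ring
  have h2pi : (2 * Real.pi * Complex.I : ℂ) ≠ 0 := by simp [Real.pi_ne_zero]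
  set V := (2 * Real.pi * Complex.I : ℂ)⁻¹ • Cint b c R (fun ζ => F (ζ + h) • G ζ) with hV
  have hVp : ∀ p, V p = (2 * Real.pi * Complex.I : ℂ)⁻¹ *
      Cint b c R (fun ζ => F (ζ + h) * gfun α r ζ p) := by
    intro p
    have := Cint_map hR hfc hft (BoundedContinuousFunction.evalCLM ℂ p)
    rw [hV, BoundedContinuousFunction.smul_apply, smul_eq_mul]
    congr 1
    refine this.trans (Cint_congr hR fun ζ hζ => ?_)
    simp [hG ζ (hGO hζ) p]
  -- first component
  have hV1 : ∀ (x : ℝ) (hx : 0 ≤ x), V (Idx.t x hx) =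
      deriv (fun y : ℝ => Complex.exp (-((h : ℂ) * (y : ℂ))) * τ y) x := by
    intro x hx
    set σ : SchwartzMap ℝ ℂ := SchwartzMap.derivCLM ℂ ℂ τ - (h:ℂ) • τ with hσ
    have hσs : ∀ y : ℝ, y < 0 → σ y = 0 := by
      intro y hy
      have h1 := supp_deriv τ hsupp y hy
      have h2 := hsupp y hy
      simp [hσ, h1, h2] at *
    have hLσ : ∀ t : ℝ, Laplace σ (a + t * Complex.I) = (b + t * Complex.I) * Laplace τ (a + t * Complex.I) := by
      intro t
      have := lap_sub τ hsupp h (s := a + t * Complex.I) (by simpa using ha)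
      rw [hσ]
      refine this.trans ?_
      rw [← hab]; ring
    have hfun : ∀ t : ℝ, F (b + t * Complex.I + h) * gfun α r (b + t * Complex.I) (Idx.t x hx) =
        Complex.exp (b * x) * (Laplace σ (a + t * Complex.I) * Complex.exp (t * Complex.I * x)) := by
      intro t
      rw [hFline, hLσ]
      simp only [gfun]
      rw [add_mul (b:ℂ) _ (x:ℂ), Complex.exp_add]; ring
    rw [hVp, Cint_line hR hcb]
    · simp only [hfun]
      rw [integral_const_mul, lap_inv σ hσs ha]
      have hd : HasDerivAt (fun y : ℝ => Complex.exp (-((h : ℂ) * (y : ℂ))))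
          (-h * Complex.exp (-((h:ℂ) * (x : ℂ)))) x := by
        have := ((Complex.ofRealCLM.hasDerivAt (x := x)).const_mul (h:ℂ)).neg.cexp
        simpa [mul_comm] using this
      have hd2 := hd.mul (τ.differentiable.differentiableAt (x := x)).hasDerivAt
      have hd3 : deriv (fun y : ℝ => Complex.exp (-((h : ℂ) * (y : ℂ))) * τ y) x = _ := hd2.deriv
      rw [hd3]
      have e1 : Complex.exp (-((h:ℂ) * x)) = Complex.exp (b * x) * Complex.exp (-(a * x)) := by
        rw [← Complex.exp_add]; congr 1; rw [ha', hb]; push_cast; ring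
      have e2 : σ x = deriv τ x - h * τ x := by
        simp [hσ]
      rw [e1, e2, smul_eq_mul]
      field_simp
      ring
    · refine (hFh.mono hrectN).mul ?_
      simp only [gfun]
      fun_prop
    · simp only [hfun]
      refine Integrable.const_mul ?_ _
      refine (lap_line_integrable σ hσs ha).mono ?_ (Eventually.of_forall fun t => ?_)
      · exact ((lap_cont σ hσs ha).mul (by fun_prop)).aestronglyMeasurable
      · rw [norm_mul, Complex.norm_exp]
        simp
  -- second component
  have hWopen : IsOpen {s : ℂ | c < s.re ∧ |s.im| < R} :=
    (isOpen_lt continuous_const Complex.continuous_re).inter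
      (isOpen_lt (Complex.continuous_im.abs) continuous_const)
  have hWpre : IsPreconnected {s : ℂ | c < s.re ∧ |s.im| < R} := by
    have : {s : ℂ | c < s.re ∧ |s.im| < R} = {s : ℂ | c < s.re} ∩ ({s : ℂ | -R < s.im} ∩ {s : ℂ | s.im < R}) := by
      ext s; simp [abs_lt]
    rw [this]
    exact ((convex_halfSpace_re_gt c).inter ((convex_halfSpace_im_gt (-R)).inter
      (convex_halfSpace_im_lt R))).isPreconnected
  have hFt : IntegrableOn (fun t : ℝ => F (b + t * Complex.I + h)) {t : ℝ | R < |t|} := by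
    simp only [hFline]
    exact (lap_line_integrable τ hsupp ha).integrableOn
  have hW : EqOn (fun s => Cint b c R (fun ζ => F (ζ + h) / (s - ζ)))
      (fun s => (2 * Real.pi * Complex.I : ℂ) * F (s + h)) {s : ℂ | c < s.re ∧ |s.im| < R} := by
    have hd1 := Cint_diff hR hcb (hFh.continuousOn.mono hGN) hFt
    have hd2 : DifferentiableOn ℂ (fun s => (2 * Real.pi * Complex.I : ℂ) * F (s + h))
        {s : ℂ | c < s.re ∧ |s.im| < R} :=
      (hFh.mono (fun s hs => hN1 s hs.1.le hs.2.le)).const_mul _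
    refine (hd1.analyticOnNhd hWopen).eqOn_of_preconnected_of_eventuallyEq (hd2.analyticOnNhd hWopen)
      hWpre (z₀ := 0) ⟨by simp; linarith, by simpa using hR⟩ ?_
    have : {s : ℂ | b < s.re} ∈ nhds (0:ℂ) :=
      (isOpen_lt continuous_const Complex.continuous_re).mem_nhds (by simp [hb]; linarith)
    filter_upwards [this] with s hs
    have hs : b < s.re := hs
    have hfun : ∀ t : ℝ, F (b + t * Complex.I + h) / (s - (b + t * Complex.I)) =
        Laplace τ (a + t * Complex.I) / (s + h - (a + t * Complex.I)) := by
      intro t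
      rw [hFline, ← hab]; congr 1; ring
    rw [Cint_line hR hcb]
    · simp only [hfun]
      rw [lap_cauchy τ hsupp ha (by simp [ha']; linarith), hFeq _ (by simp; linarith), smul_eq_mul]
      ring
    · refine (hFh.mono hrectN).div (by fun_prop) fun ζ hζ h0 => ?_
      have h1 := hζ.1.2
      rw [sub_eq_zero] at h0
      rw [h0] at hs
      linarith
    · have hlow : ∀ t : ℝ, s.re - b ≤ ‖s - (b + t * Complex.I)‖ := by
        intro t
        have := Complex.re_le_norm (s - (b + t * Complex.I))
        simpa using this
      simp only [hFline]
      have hpos : 0 < s.re - b := by linarith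
      refine ((lap_line_integrable τ hsupp ha).norm.mul_const (1 / (s.re - b))).mono' ?_ (Eventually.of_forall fun t => ?_)
      · refine ((lap_cont τ hsupp ha).div (by fun_prop) fun t h0 => ?_).aestronglyMeasurable
        have := hlow t
        rw [h0, norm_zero] at this
        linarith
      · rw [norm_div, div_eq_mul_one_div]
        gcongr
        exact hlow t
  have hV2 : ∀ (s : ℂ) (hs : s ∈ Rbar α r), V (Idx.s s hs) = F (s + h) := by
    intro s hs
    have h1 := hW (show s ∈ {s : ℂ | c < s.re ∧ |s.im| < R} from ⟨by linarith [hs.1], by linarith [hs.2.2]⟩)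
    rw [hVp]
    simp only [gfun, mul_one_div]
    simp only at h1
    rw [h1, inv_mul_cancel_left₀ h2pi]
  -- membership in the closed span
  have hDO : D ⊆ Om α r := fun ζ hζ => by
    left; left
    have : ζ.re < β := hD hζ
    change ζ.re < α
    linarith
  set M : Submodule ℂ (BoundedContinuousFunction (Idx α r) ℂ) := (Submodule.span ℂ (G '' D)).topologicalClosure with hM
  have hMc : IsClosed (M : Set (BoundedContinuousFunction (Idx α r) ℂ)) :=
    Submodule.isClosed_topologicalClosure _
  have hQ : EqOn (fun ζ => M.mkQL (G ζ)) 0 (Om α r) := by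
    have hd : DifferentiableOn ℂ (fun ζ => M.mkQL (G ζ)) (Om α r) :=
      M.mkQL.differentiable.comp_differentiableOn hGd
    obtain ⟨z, hz, hacc⟩ := hacc
    refine (hd.analyticOnNhd (Om_open α r)).eqOn_zero_of_preconnected_of_frequently_eq_zero
      (Om_preconn hα) (z₀ := z) ?_ ?_
    · left; left; change z.re < α; linarith
    · rw [accPt_iff_frequently_nhdsNE] at hacc
      refine hacc.mono fun ζ hζ => ?_
      rw [Submodule.mkQL_apply, Submodule.mkQ_apply, Submodule.Quotient.mk_eq_zero]
      exact Submodule.le_topologicalClosure _ (Submodule.subset_span ⟨ζ, hζ, rfl⟩)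
  have hVM : V ∈ M := by
    rw [hV]
    refine M.smul_mem _ ?_
    rw [← Submodule.Quotient.mk_eq_zero, ← Submodule.mkQ_apply, ← Submodule.mkQL_apply,
      Cint_map hR hfc hft M.mkQL]
    rw [Cint_congr hR (g := fun _ => 0)]
    · simp [Cint]
    · intro ζ hζ
      have := hQ (hGO hζ)
      simp only [Pi.zero_apply] at this
      simp only [map_smul, this, smul_zero]
  have hcl : V ∈ closure (Submodule.span ℂ (G '' D) : Set (BoundedContinuousFunction (Idx α r) ℂ)) := hVM
  obtain ⟨w, hw, hwV⟩ := Metric.mem_closure_iff.1 hcl (ε / 3) (by positivity)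
  obtain ⟨n, k, u, hu⟩ := (Submodule.mem_span_set').1 hw
  choose ζs hζs hGζ using fun j => (u j).2
  have hsum : ∀ p, w p = ∑ j, k j * gfun α r (ζs j) p := by
    intro p
    rw [← hu, BoundedContinuousFunction.sum_apply]
    refine Finset.sum_congr rfl fun j _ => ?_
    rw [BoundedContinuousFunction.smul_apply, smul_eq_mul, ← hGζ j, hG _ (hDO (hζs j))]
  have hbd : ∀ p, ‖V p - ∑ j, k j * gfun α r (ζs j) p‖ ≤ ε / 3 := by
    intro p
    rw [← hsum, ← BoundedContinuousFunction.sub_apply]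
    refine ((V - w).norm_coe_le_norm p).trans ?_
    rw [← dist_eq_norm]; exact hwV.le
  refine ⟨n, ζs, k, hζs, ε / 3, ε / 3, by positivity, by positivity, by linarith, ?_, ?_⟩
  · intro x hx
    have := hbd (Idx.t x hx)
    rw [hV1] at this
    simpa only [gfun, mul_assoc] using this
  · intro s hs
    have := hbd (Idx.s s hs)
    rw [hV2] at this
    simpa only [gfun, mul_one_div] using this
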